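/- Let Σ₁,…,Σ_K ∈ ℝ^{n×n} be positive definite, let α₁,…,α_K ∈ (0,1] with Σᵢ αᵢ = 1, and let f : ℝⁿ → [0,1] be measurable. Define the Gaussian-mixture smoothed function g_G(x) = Σᵢ αᵢ · E_{ε ~ N(0,Σᵢ)}[f(x + ε)], and set B⁻¹ = Σᵢ αᵢ Σᵢ⁻¹. Then g_G is √(π/2)-Lipschitz with respect to the norm ‖δ‖_{B,2} = √(δᵀB⁻¹δ); that is, |g_G(x + δ) − g_G(x)| ≤ √(π/2) · √(δᵀ(Σᵢ αᵢ Σᵢ⁻¹)δ) for all x, δ ∈ ℝⁿ. -/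

import Mathlib

open MeasureTheory Matrix

/-- Density of the centered Gaussian `N(0, Σ)` on ℝⁿ (w.r.t. Lebesgue measure). -/
noncomputable def gaussDensity (n : ℕ) (Sig : Matrix (Fin n) (Fin n) ℝ)
    (ε : Fin n → ℝ) : ℝ :=
  (Real.sqrt ((2 * Real.pi) ^ n * Sig.det))⁻¹ * Real.exp (-(ε ⬝ᵥ (Sig⁻¹ *ᵥ ε)) / 2)

/-!
Moving the shift from `f` to the noise, `g(x + δ) - g(x)` integrates `f` against the difference of
two Gaussian densities with the same covariance and means `δ`, `0`. Both have mass one, so centering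
the range of `f` bounds this by half the oscillation of `f` times the `L¹` distance of the
densities. By Cauchy-Schwarz applied to `|p - q| = |√p - √q| (√p + √q)` (Le Cam's inequality), this
distance is at most `2 √(1 - ρ²)`, where `ρ = ∫ √(p q)`. The parallelogram identity for the
quadratic form `Σ⁻¹` gives `ρ = exp (-δᵀΣ⁻¹δ / 8)`, hence `2 √(1 - ρ²) ≤ √(δᵀΣ⁻¹δ)`. Concavity of
the square root averages these bounds over the mixture; the resulting constant is
`1 / 2 ≤ √(π / 2)`.
-/

section LeCam

variable {X : Type*} [MeasurableSpace X] {μ : Measure X} {p q : X → ℝ}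

/-- The Bhattacharyya coefficient (Hellinger affinity) of two measures, given by their densities
`p` and `q` with respect to `μ`; it controls the `L¹` distance of the densities. -/
noncomputable def bhattacharyyaCoeff (μ : Measure X) (p q : X → ℝ) : ℝ :=
  ∫ x, √(p x * q x) ∂μ

lemma sq_integral_abs_mul_le {f g : X → ℝ} (hf : MemLp f 2 μ) (hg : MemLp g 2 μ) :
    (∫ x, |f x * g x| ∂μ) ^ 2 ≤ (∫ x, f x ^ 2 ∂μ) * ∫ x, g x ^ 2 ∂μ := by
  have holder := integral_mul_norm_le_Lp_mul_Lq (μ := μ) (f := f) (g := g)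
    Real.HolderConjugate.two_two (by simpa using hf) (by simpa using hg)
  simp only [Real.norm_eq_abs, ← abs_mul, Real.rpow_two, sq_abs, ← Real.sqrt_eq_rpow] at holder
  rw [← Real.sqrt_mul (by positivity)] at holder
  exact (Real.le_sqrt (by positivity) (by positivity)).mp holder

lemma memLp_two_sqrt (hp : 0 ≤ p) (hpi : Integrable p μ) : MemLp (fun x ↦ √(p x)) 2 μ := by
  rw [memLp_two_iff_integrable_sq
    (Real.continuous_sqrt.comp_aestronglyMeasurable hpi.aestronglyMeasurable)]
  exact hpi.congr (.of_forall fun x ↦ (Real.sq_sqrt (hp x)).symm)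

lemma integrable_sqrt_mul (hp : 0 ≤ p) (hq : 0 ≤ q) (hpi : Integrable p μ)
    (hqi : Integrable q μ) : Integrable (fun x ↦ √(p x * q x)) μ := by
  simp only [Real.sqrt_mul (hp _)]
  exact (memLp_two_sqrt hp hpi).integrable_mul (memLp_two_sqrt hq hqi)

lemma integral_sqrt_add_mul_sqrt_sq (hp : 0 ≤ p) (hq : 0 ≤ q) (hpi : Integrable p μ)
    (hqi : Integrable q μ) (c : ℝ) :
    ∫ x, (√(p x) + c * √(q x)) ^ 2 ∂μ =
      ∫ x, p x ∂μ + c ^ 2 * ∫ x, q x ∂μ + 2 * c * bhattacharyyaCoeff μ p q := by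
  have expand (x : X) :
      (√(p x) + c * √(q x)) ^ 2 = p x + c ^ 2 * q x + 2 * c * √(p x * q x) := by
    rw [add_sq, mul_pow, Real.sq_sqrt (hp x), Real.sq_sqrt (hq x), Real.sqrt_mul (hp x)]
    ring
  simp only [expand, bhattacharyyaCoeff]
  rw [integral_add (by fun_prop) ((integrable_sqrt_mul hp hq hpi hqi).const_mul _),
    integral_add hpi (hqi.const_mul _), integral_const_mul, integral_const_mul]

lemma sq_integral_abs_sub_le (hp : 0 ≤ p) (hq : 0 ≤ q) (hpi : Integrable p μ)
    (hqi : Integrable q μ) :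
    (∫ x, |p x - q x| ∂μ) ^ 2 ≤
      (∫ x, p x ∂μ + ∫ x, q x ∂μ) ^ 2 - 4 * bhattacharyyaCoeff μ p q ^ 2 := by
  have factor (x : X) : p x - q x = (√(p x) - √(q x)) * (√(p x) + √(q x)) := by
    rw [mul_comm, ← sq_sub_sq, Real.sq_sqrt (hp x), Real.sq_sqrt (hq x)]
  have hp2 := memLp_two_sqrt hp hpi
  have hq2 := memLp_two_sqrt hq hqi
  calc (∫ x, |p x - q x| ∂μ) ^ 2
      = (∫ x, |(√(p x) - √(q x)) * (√(p x) + √(q x))| ∂μ) ^ 2 := by simp only [factor]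
    _ ≤ (∫ x, (√(p x) - √(q x)) ^ 2 ∂μ) * ∫ x, (√(p x) + √(q x)) ^ 2 ∂μ :=
        sq_integral_abs_mul_le (hp2.sub hq2) (hp2.add hq2)
    _ = (∫ x, p x ∂μ + ∫ x, q x ∂μ) ^ 2 - 4 * bhattacharyyaCoeff μ p q ^ 2 := by
        have hminus := integral_sqrt_add_mul_sqrt_sq hp hq hpi hqi (-1)
        have hplus := integral_sqrt_add_mul_sqrt_sq hp hq hpi hqi 1
        simp only [neg_one_mul, one_mul, ← sub_eq_add_neg] at hminus hplus
        rw [hminus, hplus]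
        ring

lemma abs_integral_mul_sub_integral_mul_le {f : X → ℝ} {a b : ℝ}
    (hf : AEStronglyMeasurable f μ) (hfab : ∀ x, f x ∈ Set.Icc a b)
    (hpi : Integrable p μ) (hqi : Integrable q μ) (hpq : ∫ x, p x ∂μ = ∫ x, q x ∂μ) :
    |∫ x, f x * p x ∂μ - ∫ x, f x * q x ∂μ| ≤ (b - a) / 2 * ∫ x, |p x - q x| ∂μ := by
  have hbound (x : X) : ‖f x - (a + b) / 2‖ ≤ (b - a) / 2 := by
    rw [Real.norm_eq_abs, abs_le]
    constructor <;> linarith [(hfab x).1, (hfab x).2]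
  have hcenter {r : X → ℝ} (hr : Integrable r μ) :
      Integrable (fun x ↦ (f x - (a + b) / 2) * r x) μ :=
    hr.bdd_mul (hf.sub aestronglyMeasurable_const) (.of_forall hbound)
  have hsplit {r : X → ℝ} (hr : Integrable r μ) :
      ∫ x, f x * r x ∂μ = ∫ x, (f x - (a + b) / 2) * r x ∂μ + (a + b) / 2 * ∫ x, r x ∂μ := by
    rw [← integral_const_mul, ← integral_add (hcenter hr) (hr.const_mul _)]
    simp only [sub_mul, sub_add_cancel]
  rw [hsplit hpi, hsplit hqi, hpq, add_sub_add_right_eq_sub,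
    ← integral_sub (hcenter hpi) (hcenter hqi), ← integral_const_mul, ← Real.norm_eq_abs]
  refine norm_integral_le_of_norm_le ((hpi.sub hqi).abs.const_mul _) (.of_forall fun x ↦ ?_)
  rw [← mul_sub, norm_mul, Real.norm_eq_abs (p x - q x)]
  gcongr
  exact hbound x

end LeCam

section GaussianIntegral

variable {ι : Type*} [Fintype ι]

lemma integral_exp_neg_dotProduct_self_div_two :
    ∫ y : ι → ℝ, Real.exp (-(y ⬝ᵥ y) / 2) = √((2 * Real.pi) ^ Fintype.card ι) := by
  have hprod (y : ι → ℝ) :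
      Real.exp (-(y ⬝ᵥ y) / 2) = ∏ i, Real.exp (-(1 / 2) * y i ^ 2) := by
    rw [← Real.exp_sum, ← Finset.mul_sum, dotProduct]
    simp only [sq]
    ring_nf
  simp only [hprod]
  rw [integral_fintype_prod_volume_eq_pow fun t : ℝ ↦ Real.exp (-(1 / 2) * t ^ 2),
    integral_gaussian, div_div_eq_mul_div, div_one, mul_comm Real.pi]
  refine (Real.sqrt_eq_iff_mul_self_eq (by positivity) (by positivity)).mpr ?_ |>.symm
  rw [← mul_pow, Real.mul_self_sqrt (by positivity)]

variable [DecidableEq ι]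

lemma integral_comp_mulVec {E : Type*} [NormedAddCommGroup E] [NormedSpace ℝ E]
    {M : Matrix ι ι ℝ} (hM : M.det ≠ 0) (F : (ι → ℝ) → E) :
    ∫ x, F (M *ᵥ x) = |M.det⁻¹| • ∫ y, F y := by
  have hemb : MeasurableEmbedding (toLin' M) :=
    (LinearMap.equivOfDetNeZero (toLin' M)
      (by rwa [LinearMap.det_toLin'])).toContinuousLinearEquiv.toHomeomorph.measurableEmbedding
  rw [← ENNReal.toReal_ofReal (abs_nonneg M.det⁻¹), ← integral_smul_measure,
    ← Real.map_matrix_volume_pi_eq_smul_volume_pi hM, hemb.integral_map]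
  simp only [toLin'_apply]

open scoped MatrixOrder in
lemma integral_exp_neg_dotProduct_mulVec_div_two {A : Matrix ι ι ℝ} (hA : A.PosDef) :
    ∫ v, Real.exp (-(v ⬝ᵥ A *ᵥ v) / 2) = √((2 * Real.pi) ^ Fintype.card ι / A.det) := by
  obtain ⟨B, hB⟩ := CStarAlgebra.nonneg_iff_eq_star_mul_self.mp hA.posSemidef.nonneg
  rw [star_eq_conjTranspose, conjTranspose_eq_transpose_of_trivial] at hB
  have hdet : A.det = B.det ^ 2 := by rw [hB, det_mul, det_transpose, sq]
  have hquad (v : ι → ℝ) : v ⬝ᵥ A *ᵥ v = (B *ᵥ v) ⬝ᵥ (B *ᵥ v) := by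
    rw [hB, ← mulVec_mulVec, dotProduct_mulVec, vecMul_transpose]
  have hBdet : B.det ≠ 0 := fun h ↦ hA.det_pos.ne' (by rw [hdet, h, zero_pow two_ne_zero])
  simp only [hquad]
  rw [integral_comp_mulVec hBdet fun y ↦ Real.exp (-(y ⬝ᵥ y) / 2),
    integral_exp_neg_dotProduct_self_div_two, hdet, Real.sqrt_div' _ (sq_nonneg _),
    Real.sqrt_sq_eq_abs, abs_inv, smul_eq_mul, inv_mul_eq_div]

end GaussianIntegral

lemma dotProduct_mulVec_add_dotProduct_mulVec_sub {ι R : Type*} [Fintype ι] [Field R]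
    [NeZero (2 : R)] (A : Matrix ι ι R) (v w : ι → R) :
    v ⬝ᵥ A *ᵥ v + (v - w) ⬝ᵥ A *ᵥ (v - w) =
      2 * ((v - (2⁻¹ : R) • w) ⬝ᵥ A *ᵥ (v - (2⁻¹ : R) • w)) + w ⬝ᵥ A *ᵥ w / 2 := by
  simp only [mulVec_sub, mulVec_smul, sub_dotProduct, dotProduct_sub, smul_dotProduct,
    dotProduct_smul, smul_eq_mul]
  field_simp
  ring

lemma sum_mul_sqrt_dotProduct_mulVec_le {ι κ : Type*} [Fintype ι] [Fintype κ]
    {A : κ → Matrix ι ι ℝ} (hA : ∀ i, (A i).PosSemidef) {α : κ → ℝ} (hα : ∀ i, 0 ≤ α i)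
    (hsum : ∑ i, α i = 1) (v : ι → ℝ) :
    ∑ i, α i * √(v ⬝ᵥ A i *ᵥ v) ≤ √(v ⬝ᵥ (∑ i, α i • A i) *ᵥ v) := by
  have hnonneg (i : κ) : 0 ≤ v ⬝ᵥ A i *ᵥ v := by
    simpa only [star_trivial] using (hA i).dotProduct_mulVec_nonneg v
  have jensen := Real.strictConcaveOn_sqrt.concaveOn.le_map_sum (t := Finset.univ)
    (fun i _ ↦ hα i) hsum (fun i _ ↦ Set.mem_Ici.mpr (hnonneg i))
  simpa only [smul_eq_mul, sum_mulVec, dotProduct_sum, smul_mulVec, dotProduct_smul] using jensen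

section Gaussian

variable {n : ℕ} {Sig : Matrix (Fin n) (Fin n) ℝ}

lemma gaussDensity_nonneg : 0 ≤ gaussDensity n Sig := fun ε ↦ by
  rw [Pi.zero_apply, gaussDensity]
  positivity

lemma integral_gaussDensity (hSig : Sig.PosDef) : ∫ ε, gaussDensity n Sig ε = 1 := by
  have hdet : 0 < Sig.det := hSig.det_pos
  simp only [gaussDensity]
  rw [integral_const_mul, integral_exp_neg_dotProduct_mulVec_div_two hSig.inv, Fintype.card_fin,
    det_nonsing_inv, Ring.inverse_eq_inv', div_inv_eq_mul]
  exact inv_mul_cancel₀ (by positivity)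

lemma integrable_gaussDensity (hSig : Sig.PosDef) : Integrable (gaussDensity n Sig) :=
  integrable_of_integral_eq_one (integral_gaussDensity hSig)

lemma gaussDensity_sub_mul_gaussDensity (ε δ : Fin n → ℝ) :
    gaussDensity n Sig (ε - δ) * gaussDensity n Sig ε =
      (Real.exp (-(δ ⬝ᵥ Sig⁻¹ *ᵥ δ) / 8) * gaussDensity n Sig (ε - (2⁻¹ : ℝ) • δ)) ^ 2 := by
  have parallelogram := dotProduct_mulVec_add_dotProduct_mulVec_sub Sig⁻¹ ε δ
  simp only [gaussDensity]
  rw [mul_mul_mul_comm, ← sq, ← Real.exp_add, mul_left_comm, ← Real.exp_add,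
    mul_pow _ (Real.exp _), ← Real.exp_nat_mul]
  congr 2
  push_cast
  linarith

lemma bhattacharyyaCoeff_gaussDensity_sub (hSig : Sig.PosDef) (δ : Fin n → ℝ) :
    bhattacharyyaCoeff volume (fun ε ↦ gaussDensity n Sig (ε - δ)) (gaussDensity n Sig) =
      Real.exp (-(δ ⬝ᵥ Sig⁻¹ *ᵥ δ) / 8) := by
  simp only [bhattacharyyaCoeff, gaussDensity_sub_mul_gaussDensity]
  simp only [Real.sqrt_sq (mul_nonneg (Real.exp_nonneg _) (gaussDensity_nonneg _))]
  rw [integral_const_mul, integral_sub_right_eq_self (gaussDensity n Sig),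
    integral_gaussDensity hSig, mul_one]

lemma integral_abs_gaussDensity_sub_sub_le (hSig : Sig.PosDef) (δ : Fin n → ℝ) :
    ∫ ε, |gaussDensity n Sig (ε - δ) - gaussDensity n Sig ε| ≤ √(δ ⬝ᵥ Sig⁻¹ *ᵥ δ) := by
  have hint := integrable_gaussDensity hSig
  have leCam := sq_integral_abs_sub_le (p := fun ε ↦ gaussDensity n Sig (ε - δ))
    (fun ε ↦ gaussDensity_nonneg (ε - δ)) gaussDensity_nonneg (hint.comp_sub_right δ) hint
  rw [bhattacharyyaCoeff_gaussDensity_sub hSig, integral_sub_right_eq_self (gaussDensity n Sig),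
    integral_gaussDensity hSig, ← Real.exp_nat_mul] at leCam
  refine Real.le_sqrt_of_sq_le (leCam.trans ?_)
  have hexp := Real.add_one_le_exp (((2 : ℕ) : ℝ) * (-(δ ⬝ᵥ Sig⁻¹ *ᵥ δ) / 8))
  push_cast at hexp ⊢
  linarith

/-- The expectation of `f (x + ε)` over centered Gaussian noise `ε` with covariance `Sig`, written
as an integral against the Lebesgue density. -/
noncomputable def gaussianSmoothing (Sig : Matrix (Fin n) (Fin n) ℝ) (f : (Fin n → ℝ) → ℝ)
    (x : Fin n → ℝ) : ℝ :=
  ∫ ε, f (x + ε) * gaussDensity n Sig ε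

lemma gaussianSmoothing_add (f : (Fin n → ℝ) → ℝ) (x δ : Fin n → ℝ) :
    gaussianSmoothing Sig f (x + δ) = ∫ ε, f (x + ε) * gaussDensity n Sig (ε - δ) := by
  rw [gaussianSmoothing,
    ← integral_sub_right_eq_self (fun ε ↦ f (x + δ + ε) * gaussDensity n Sig ε) δ]
  simp only [add_assoc, add_sub_cancel]

lemma abs_gaussianSmoothing_add_sub_le (hSig : Sig.PosDef) {f : (Fin n → ℝ) → ℝ} {a b : ℝ}
    (hf : AEStronglyMeasurable f) (hfab : ∀ v, f v ∈ Set.Icc a b) (x δ : Fin n → ℝ) :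
    |gaussianSmoothing Sig f (x + δ) - gaussianSmoothing Sig f x| ≤
      (b - a) / 2 * √(δ ⬝ᵥ Sig⁻¹ *ᵥ δ) := by
  have hab : a ≤ b := (hfab 0).1.trans (hfab 0).2
  have hint := integrable_gaussDensity hSig
  have hfx : AEStronglyMeasurable fun ε ↦ f (x + ε) :=
    hf.comp_measurePreserving (measurePreserving_add_left volume x)
  rw [gaussianSmoothing_add, gaussianSmoothing]
  refine (abs_integral_mul_sub_integral_mul_le hfx (fun ε ↦ hfab (x + ε))
    (hint.comp_sub_right δ) hint (integral_sub_right_eq_self _ δ)).trans ?_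
  gcongr
  exact integral_abs_gaussDensity_sub_sub_le hSig δ

theorem gaussian_mixture_smoothing_lipschitz_general {κ : Type*} [Fintype κ]
    {Sigs : κ → Matrix (Fin n) (Fin n) ℝ} (hSigs : ∀ i, (Sigs i).PosDef)
    {α : κ → ℝ} (hα : ∀ i, 0 ≤ α i) (hsum : ∑ i, α i = 1)
    {f : (Fin n → ℝ) → ℝ} {a b : ℝ} (hf : AEStronglyMeasurable f)
    (hfab : ∀ v, f v ∈ Set.Icc a b) (x δ : Fin n → ℝ) :
    |∑ i, α i * gaussianSmoothing (Sigs i) f (x + δ) -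
        ∑ i, α i * gaussianSmoothing (Sigs i) f x| ≤
      (b - a) / 2 * √(δ ⬝ᵥ (∑ i, α i • (Sigs i)⁻¹) *ᵥ δ) := by
  have hab : a ≤ b := (hfab 0).1.trans (hfab 0).2
  calc |∑ i, α i * gaussianSmoothing (Sigs i) f (x + δ) -
          ∑ i, α i * gaussianSmoothing (Sigs i) f x|
      = |∑ i, α i * (gaussianSmoothing (Sigs i) f (x + δ) - gaussianSmoothing (Sigs i) f x)| := by
        simp only [mul_sub, Finset.sum_sub_distrib]
    _ ≤ ∑ i, α i * |gaussianSmoothing (Sigs i) f (x + δ) - gaussianSmoothing (Sigs i) f x| := by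
        refine (Finset.abs_sum_le_sum_abs _ _).trans_eq (Finset.sum_congr rfl fun i _ ↦ ?_)
        rw [abs_mul, abs_of_nonneg (hα i)]
    _ ≤ ∑ i, α i * ((b - a) / 2 * √(δ ⬝ᵥ (Sigs i)⁻¹ *ᵥ δ)) := by
        gcongr with i
        · exact hα i
        · exact abs_gaussianSmoothing_add_sub_le (hSigs i) hf hfab x δ
    _ = (b - a) / 2 * ∑ i, α i * √(δ ⬝ᵥ (Sigs i)⁻¹ *ᵥ δ) := by
        simp only [Finset.mul_sum, mul_left_comm]
    _ ≤ (b - a) / 2 * √(δ ⬝ᵥ (∑ i, α i • (Sigs i)⁻¹) *ᵥ δ) := by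
        gcongr
        exact sum_mul_sqrt_dotProduct_mulVec_le (fun i ↦ (hSigs i).inv.posSemidef) hα hsum δ

end Gaussian

/-- the Gaussian-mixture smoothed function
`g_G(x) = Σᵢ αᵢ E_{ε ~ N(0,Σᵢ)}[f(x+ε)]` is `√(π/2)`-Lipschitz w.r.t.
`‖δ‖_{B,2} = √(δᵀB⁻¹δ)` where `B⁻¹ = Σᵢ αᵢ Σᵢ⁻¹`. -/
theorem gaussian_mixture_smoothing_lipschitz (n K : ℕ)
    (Sigs : Fin K → Matrix (Fin n) (Fin n) ℝ) (hSigs : ∀ i, (Sigs i).PosDef)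
    (α : Fin K → ℝ) (hα : ∀ i, α i ∈ Set.Ioc (0:ℝ) 1) (hsum : ∑ i, α i = 1)
    (f : (Fin n → ℝ) → ℝ) (hf : Measurable f) (hf01 : ∀ v, f v ∈ Set.Icc (0:ℝ) 1)
    (gG : (Fin n → ℝ) → ℝ)
    (hgG : ∀ x, gG x = ∑ i, α i * ∫ ε, f (x + ε) * gaussDensity n (Sigs i) ε) :
    ∀ (x δ : Fin n → ℝ), |gG (x + δ) - gG x| ≤
      Real.sqrt (Real.pi / 2) * Real.sqrt (δ ⬝ᵥ ((∑ i, α i • (Sigs i)⁻¹) *ᵥ δ)) := by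
  intro x δ
  have hconst : (1 - 0) / 2 ≤ √(Real.pi / 2) :=
    Real.le_sqrt_of_sq_le (by linarith [Real.pi_gt_three])
  rw [hgG, hgG]
  exact (gaussian_mixture_smoothing_lipschitz_general hSigs (fun i ↦ (hα i).1.le) hsum
    hf.aestronglyMeasurable hf01 x δ).trans (by gcongr)
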